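/- Let $s \in (0,1)$ and $C \geq 1$ be such that every positive harmonic function on the upper half-plane $\mathbb{H}^2 = \{(x_1,x_2) \in \mathbb{R}^2 : x_2 > 0\}$ satisfies the $(s, C)$-Harnack inequality in $\mathbb{H}^2$. Then for all $x, y \in \mathbb{H}^2$ the Harnack metric satisfies $h_{\mathbb{H}^2}(x,y) \leq \left(1 + \frac{\rho_{\mathbb{H}^2}(x,y)}{\log((1+s)/(1-s))}\right) \log C$, where $\rho_{\mathbb{H}^2}$ is the hyperbolic distance of the upper half-plane, determined by $\cosh \rho_{\mathbb{H}^2}(x,y) = 1 + \frac{|x-y|^2}{2 x_2 y_2}$. -/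

import Mathlib

open Metric Set

/-- `u` is harmonic on `G ⊆ ℝ²`: it is twice continuously differentiable on `G` and satisfies
the Laplace equation `∂²u/∂x₁² + ∂²u/∂x₂² = 0` on `G`. -/
def IsHarmonicOn (u : EuclideanSpace ℝ (Fin 2) → ℝ) (G : Set (EuclideanSpace ℝ (Fin 2))) :
    Prop :=
  ContDiffOn ℝ 2 u G ∧ ∀ x ∈ G,
    ∑ i : Fin 2, iteratedFDeriv ℝ 2 u x
      ![EuclideanSpace.single i 1, EuclideanSpace.single i 1] = 0

/-- `u` satisfies the `(s, C)`-Harnack inequality in `G`. -/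
def SatisfiesHarnack (u : EuclideanSpace ℝ (Fin 2) → ℝ) (G : Set (EuclideanSpace ℝ (Fin 2)))
    (s C : ℝ) : Prop :=
  ∀ x ∈ G, ∀ r > (0 : ℝ), ball x r ⊆ G →
    ∀ z₁ ∈ closedBall x (s * r), ∀ z₂ ∈ closedBall x (s * r), u z₁ ≤ C * u z₂

/-- The Harnack metric on a domain `G`: `h_G(x,y) = sup |log(u(x)/u(y))|`, the supremum being
taken over all positive harmonic functions `u` on `G`. -/
noncomputable def harnackMetric (G : Set (EuclideanSpace ℝ (Fin 2)))
    (x y : EuclideanSpace ℝ (Fin 2)) : ℝ :=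
  sSup {t : ℝ | ∃ u : EuclideanSpace ℝ (Fin 2) → ℝ,
    (∀ z ∈ G, 0 < u z) ∧ IsHarmonicOn u G ∧ t = |Real.log (u x / u y)|}

/-- The inverse hyperbolic cosine, `arcosh t = log (t + √(t² - 1))`. -/
noncomputable def arcosh (t : ℝ) : ℝ := Real.log (t + Real.sqrt (t ^ 2 - 1))

/-- The upper half-plane `ℍ² = {(x₁,x₂) ∈ ℝ² : x₂ > 0}`. -/
def upperHalfPlane2 : Set (EuclideanSpace ℝ (Fin 2)) := {x | 0 < x 1}

/-- The hyperbolic distance of the upper half-plane, determined by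
`cosh ρ(x,y) = 1 + |x-y|²/(2 x₂ y₂)`. -/
noncomputable def rhoH (x y : EuclideanSpace ℝ (Fin 2)) : ℝ :=
  arcosh (1 + ‖x - y‖ ^ 2 / (2 * x 1 * y 1))

/-!
Identify `ℝ²` with `ℂ`. A closed hyperbolic disc of radius `artanh s` in the upper half-plane is a
closed Euclidean disc whose radius is `s` times the height of its Euclidean center, so the
`(s, C)`-Harnack inequality compares the values of `u` at any two of its points. Two points at
hyperbolic distance at most `2 artanh s = log ((1 + s) / (1 - s))` lie in the disc around their
hyperbolic midpoint, so along a geodesic the oscillation of `log u` over such a distance is at most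
`log C`. Dividing the geodesic from `x` to `y` into at most `1 + ρ(x, y) / log ((1 + s) / (1 - s))`
pieces no longer than this gives the bound.
-/

open Real (artanh cosh log sinh tanh)
open scoped UpperHalfPlane

section CoarseLipschitz

variable {E X : Type*} [SeminormedAddCommGroup E] [NormedSpace ℝ E] [PseudoMetricSpace X]

lemma dist_le_nsmul_of_dist_le_nsmul {f : E → X} {L K : ℝ}
    (hf : ∀ a b, dist a b ≤ L → dist (f a) (f b) ≤ K) {a b : E} {n : ℕ} (hn : n ≠ 0)
    (hab : dist a b ≤ n • L) : dist (f a) (f b) ≤ n • K := by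
  let p : ℕ → E := fun i ↦ AffineMap.lineMap a b (i / n : ℝ)
  have p_zero : p 0 = a := by simp [p]
  have p_last : p n = b := by simp [p, hn]
  have dist_p_succ (i : ℕ) : dist (p i) (p (i + 1)) ≤ L := by
    calc dist (p i) (p (i + 1)) = dist a b / n := by
          have hstep : dist (i / n : ℝ) ((i + 1 : ℕ) / n) = 1 / n := by
            rw [Real.dist_eq, ← sub_div, abs_div]
            simp
          rw [dist_lineMap_lineMap, hstep, one_div_mul_eq_div]
      _ ≤ L := by
          rwa [div_le_iff₀' (by positivity), ← nsmul_eq_mul]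
  calc dist (f a) (f b) = dist (f (p 0)) (f (p n)) := by rw [p_zero, p_last]
    _ ≤ ∑ _i ∈ Finset.range n, K :=
        dist_le_range_sum_of_dist_le n fun {i} _ ↦ hf _ _ (dist_p_succ i)
    _ = n • K := by rw [Finset.sum_const, Finset.card_range]

lemma dist_le_one_add_div_mul {f : E → X} {L K : ℝ} (hL : 0 < L)
    (hf : ∀ a b, dist a b ≤ L → dist (f a) (f b) ≤ K) (a b : E) :
    dist (f a) (f b) ≤ (1 + dist a b / L) * K := by
  set n : ℕ := ⌊dist a b / L⌋₊ + 1 with hn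
  have hK : 0 ≤ K := dist_nonneg.trans (hf a a (by rw [dist_self]; exact hL.le))
  have le_n : dist a b ≤ n • L := by
    rw [nsmul_eq_mul, ← div_le_iff₀ hL, hn, Nat.cast_succ]
    exact (Nat.lt_floor_add_one _).le
  have n_le : (n : ℝ) ≤ 1 + dist a b / L := by
    rw [hn, Nat.cast_succ, add_comm]
    gcongr
    exact Nat.floor_le (by positivity)
  calc dist (f a) (f b) ≤ n • K := dist_le_nsmul_of_dist_le_nsmul hf (Nat.succ_ne_zero _) le_n
    _ = n * K := nsmul_eq_mul n K
    _ ≤ (1 + dist a b / L) * K := by gcongr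

end CoarseLipschitz

lemma dist_log_le_log {a b C : ℝ} (ha : 0 < a) (hb : 0 < b) (hab : a ≤ C * b) (hba : b ≤ C * a) :
    dist (log a) (log b) ≤ log C := by
  have hC : C ≠ 0 := by
    rintro rfl
    linarith
  have log_a_le := Real.log_le_log ha hab
  have log_b_le := Real.log_le_log hb hba
  rw [Real.log_mul hC hb.ne'] at log_a_le
  rw [Real.log_mul hC ha.ne'] at log_b_le
  rw [Real.dist_eq, abs_le]
  constructor <;> linarith

lemma two_mul_artanh {s : ℝ} (hs : s ∈ Icc (-1 : ℝ) 1) :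
    2 * artanh s = log ((1 + s) / (1 - s)) := by
  rw [Real.artanh_eq_half_log hs]
  ring

lemma sinh_artanh_eq_mul_cosh {s : ℝ} (hs : s ∈ Ioo (-1 : ℝ) 1) :
    sinh (artanh s) = s * cosh (artanh s) := by
  rw [← div_eq_iff (Real.cosh_pos _).ne', ← Real.tanh_eq_sinh_div_cosh, Real.tanh_artanh hs]

section Geodesics

/-- The hyperbolic geodesic along the Euclidean half-circle with center `c` on the real axis and
radius `R`, parametrized by hyperbolic arc length from its top point. -/
noncomputable def halfCircleGeodesic (c : ℝ) {R : ℝ} (hR : 0 < R) (t : ℝ) : ℍ :=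
  ⟨⟨c + R * tanh t, R / cosh t⟩, div_pos hR (Real.cosh_pos t)⟩

lemma sinh_sub_sq_add_cosh_sq_add_cosh_sq (a b : ℝ) :
    sinh (a - b) ^ 2 + cosh a ^ 2 + cosh b ^ 2 = 2 * cosh a * cosh b * cosh (a - b) := by
  rw [Real.sinh_sub, Real.cosh_sub]
  linear_combination (-cosh b ^ 2) * Real.cosh_sq a - (cosh a ^ 2) * Real.cosh_sq b

lemma isometry_halfCircleGeodesic (c : ℝ) {R : ℝ} (hR : 0 < R) :
    Isometry (halfCircleGeodesic c hR) := by
  refine Isometry.of_dist_eq fun a b ↦ ?_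
  suffices cosh (dist (halfCircleGeodesic c hR a) (halfCircleGeodesic c hR b)) =
      cosh (dist a b) from Real.cosh_injOn dist_nonneg dist_nonneg this
  rw [UpperHalfPlane.cosh_dist', Real.dist_eq, Real.cosh_abs]
  simp only [halfCircleGeodesic, UpperHalfPlane.mk_re, UpperHalfPlane.mk_im,
    Real.tanh_eq_sinh_div_cosh]
  field_simp
  have identity := sinh_sub_sq_add_cosh_sq_add_cosh_sq a b
  rw [Real.sinh_sub] at identity
  linear_combination R ^ 2 * identity

lemma mem_range_halfCircleGeodesic {c R : ℝ} (hR : 0 < R) {z : ℍ}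
    (hz : (z.re - c) ^ 2 + z.im ^ 2 = R ^ 2) : z ∈ range (halfCircleGeodesic c hR) := by
  have him := z.im_pos
  have slope_mem : (z.re - c) / R ∈ Ioo (-1 : ℝ) 1 := by
    rw [mem_Ioo, ← abs_lt, ← sq_lt_one_iff_abs_lt_one, div_pow, div_lt_one (by positivity)]
    nlinarith
  have sqrt_eq : √(1 - ((z.re - c) / R) ^ 2) = z.im / R := by
    rw [← Real.sqrt_sq (by positivity : 0 ≤ z.im / R)]
    congr 1
    field_simp
    linarith
  refine ⟨artanh ((z.re - c) / R), UpperHalfPlane.ext_re_im ?_ ?_⟩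
  · simp only [halfCircleGeodesic, UpperHalfPlane.mk_re, Real.tanh_artanh slope_mem]
    field_simp
    ring
  · simp only [halfCircleGeodesic, UpperHalfPlane.mk_im, Real.cosh_artanh slope_mem, sqrt_eq]
    field_simp

lemma exists_equidistant_real {z w : ℂ} (h : z.re ≠ w.re) :
    ∃ c : ℝ, (z.re - c) ^ 2 + z.im ^ 2 = (w.re - c) ^ 2 + w.im ^ 2 := by
  have hne : z.re - w.re ≠ 0 := sub_ne_zero.mpr h
  refine ⟨(z.re ^ 2 + z.im ^ 2 - w.re ^ 2 - w.im ^ 2) / (2 * (z.re - w.re)), ?_⟩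
  field_simp
  ring

lemma exists_isometry_mem_range (z w : ℍ) :
    ∃ γ : ℝ → ℍ, Isometry γ ∧ z ∈ range γ ∧ w ∈ range γ := by
  by_cases h : z.re = w.re
  · exact ⟨_, UpperHalfPlane.isometry_vertical_line z.re,
      ⟨log z.im, UpperHalfPlane.ext_re_im rfl (Real.exp_log z.im_pos)⟩,
      ⟨log w.im, UpperHalfPlane.ext_re_im h (Real.exp_log w.im_pos)⟩⟩
  · obtain ⟨c, hc⟩ := exists_equidistant_real (z := z) (w := w) h
    have radius_sq_pos : 0 < (z.re - c) ^ 2 + z.im ^ 2 := by positivity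
    have sq_sqrt := Real.sq_sqrt radius_sq_pos.le
    have radius_pos := Real.sqrt_pos.mpr radius_sq_pos
    exact ⟨_, isometry_halfCircleGeodesic c radius_pos,
      mem_range_halfCircleGeodesic radius_pos sq_sqrt.symm,
      mem_range_halfCircleGeodesic radius_pos (hc.symm.trans sq_sqrt.symm)⟩

end Geodesics

section Plane

/-- The identification `a + b i ↦ (a, b)` of `ℂ` with `ℝ²`, through which the hyperbolic geometry
of `ℍ` is read in `upperHalfPlane2`. -/
noncomputable abbrev complexToPlane : ℂ ≃ₗᵢ[ℝ] EuclideanSpace ℝ (Fin 2) :=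
  Complex.orthonormalBasisOneI.repr

lemma complexToPlane_apply_one (z : ℂ) : complexToPlane z 1 = z.im := by
  simp [Complex.orthonormalBasisOneI_repr_apply]

lemma complexToPlane_coe_mem (z : ℍ) : complexToPlane z ∈ upperHalfPlane2 := by
  change 0 < complexToPlane z 1
  rw [complexToPlane_apply_one]
  exact z.im_pos

lemma exists_complexToPlane_coe_eq {x : EuclideanSpace ℝ (Fin 2)} (hx : x ∈ upperHalfPlane2) :
    ∃ z : ℍ, complexToPlane z = x := by
  refine ⟨⟨complexToPlane.symm x, ?_⟩, complexToPlane.apply_symm_apply x⟩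
  rwa [← complexToPlane_apply_one, complexToPlane.apply_symm_apply]

lemma rhoH_complexToPlane (z w : ℍ) : rhoH (complexToPlane z) (complexToPlane w) = dist z w := by
  change Real.arcosh _ = _
  rw [← dist_eq_norm, complexToPlane.dist_map, complexToPlane_apply_one, complexToPlane_apply_one]
  exact (congrArg Real.arcosh (UpperHalfPlane.cosh_dist z w).symm).trans
    (Real.arcosh_cosh dist_nonneg)

lemma ball_subset_upperHalfPlane2 (c : EuclideanSpace ℝ (Fin 2)) :
    ball c (c 1) ⊆ upperHalfPlane2 := by
  intro z hz
  have h : |z 1 - c 1| < c 1 := (PiLp.norm_apply_le (z - c) 1).trans_lt (mem_ball_iff_norm.mp hz)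
  change 0 < z 1
  linarith [(abs_lt.mp h).1]

lemma complexToPlane_mem_closedBall_center {s : ℝ} (hs : s ∈ Ioo (-1 : ℝ) 1) {z m : ℍ}
    (hz : dist z m ≤ artanh s) :
    complexToPlane z ∈ closedBall (complexToPlane (m.center (artanh s)))
      (s * complexToPlane (m.center (artanh s)) 1) := by
  rw [mem_closedBall, complexToPlane.dist_map, complexToPlane_apply_one]
  calc dist (z : ℂ) (m.center (artanh s)) ≤ m.im * sinh (artanh s) :=
        UpperHalfPlane.dist_le_iff_dist_coe_center_le.mp hz
    _ = s * (m.im * cosh (artanh s)) := by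
        rw [sinh_artanh_eq_mul_cosh hs]
        ring

end Plane

section Harnack

variable {u : EuclideanSpace ℝ (Fin 2) → ℝ} {s C : ℝ}

lemma SatisfiesHarnack.le_mul_of_dist_le_artanh (hu : SatisfiesHarnack u upperHalfPlane2 s C)
    (hs : s ∈ Ioo (-1 : ℝ) 1) {z w m : ℍ} (hz : dist z m ≤ artanh s) (hw : dist w m ≤ artanh s) :
    u (complexToPlane z) ≤ C * u (complexToPlane w) := by
  have center_mem := complexToPlane_coe_mem (m.center (artanh s))
  exact hu _ center_mem _ center_mem (ball_subset_upperHalfPlane2 _)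
    _ (complexToPlane_mem_closedBall_center hs hz) _ (complexToPlane_mem_closedBall_center hs hw)

lemma SatisfiesHarnack.dist_log_le_of_isometry (hu : SatisfiesHarnack u upperHalfPlane2 s C)
    (hpos : ∀ x ∈ upperHalfPlane2, 0 < u x) (hs : s ∈ Ioo (-1 : ℝ) 1) {γ : ℝ → ℍ}
    (hγ : Isometry γ) {a b : ℝ} (hab : dist a b ≤ 2 * artanh s) :
    dist (log (u (complexToPlane (γ a)))) (log (u (complexToPlane (γ b)))) ≤ log C := by
  have half_dist_le : ‖(2 : ℝ)‖⁻¹ * dist a b ≤ artanh s := by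
    rw [Real.norm_two]
    linarith
  have ha : dist (γ a) (γ (midpoint ℝ a b)) ≤ artanh s := by
    rwa [hγ.dist_eq, dist_left_midpoint]
  have hb : dist (γ b) (γ (midpoint ℝ a b)) ≤ artanh s := by
    rwa [hγ.dist_eq, dist_right_midpoint]
  exact dist_log_le_log (hpos _ (complexToPlane_coe_mem _)) (hpos _ (complexToPlane_coe_mem _))
    (hu.le_mul_of_dist_le_artanh hs ha hb) (hu.le_mul_of_dist_le_artanh hs hb ha)

lemma SatisfiesHarnack.abs_log_div_le (hu : SatisfiesHarnack u upperHalfPlane2 s C)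
    (hpos : ∀ x ∈ upperHalfPlane2, 0 < u x) (hs : s ∈ Ioo (0 : ℝ) 1) (z w : ℍ) :
    |log (u (complexToPlane z) / u (complexToPlane w))| ≤
      (1 + dist z w / (2 * artanh s)) * log C := by
  obtain ⟨γ, hγ, ⟨a, rfl⟩, ⟨b, rfl⟩⟩ := exists_isometry_mem_range z w
  have step_pos : 0 < 2 * artanh s := mul_pos two_pos (Real.artanh_pos hs)
  have hs' : s ∈ Ioo (-1 : ℝ) 1 := ⟨by linarith [hs.1], hs.2⟩
  rw [Real.log_div (hpos _ (complexToPlane_coe_mem _)).ne' (hpos _ (complexToPlane_coe_mem _)).ne',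
    ← Real.dist_eq, hγ.dist_eq]
  exact dist_le_one_add_div_mul (f := fun t ↦ log (u (complexToPlane (γ t)))) step_pos
    (fun _ _ ↦ hu.dist_log_le_of_isometry hpos hs' hγ) a b

end Harnack

/-- If every positive harmonic function on the upper half-plane `ℍ²` satisfies the
`(s, C)`-Harnack inequality in `ℍ²`, then the Harnack metric satisfies
`h(x,y) ≤ (1 + ρ(x,y)/log((1+s)/(1-s))) log C` for all `x, y ∈ ℍ²`. -/
theorem stmt_7 (s C : ℝ) (hs : s ∈ Ioo (0 : ℝ) 1) (hC : 1 ≤ C)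
    (hH : ∀ u : EuclideanSpace ℝ (Fin 2) → ℝ,
      (∀ z ∈ upperHalfPlane2, 0 < u z) → IsHarmonicOn u upperHalfPlane2 →
      SatisfiesHarnack u upperHalfPlane2 s C)
    (x y : EuclideanSpace ℝ (Fin 2)) (hx : x ∈ upperHalfPlane2) (hy : y ∈ upperHalfPlane2) :
    harnackMetric upperHalfPlane2 x y ≤
      (1 + rhoH x y / Real.log ((1 + s) / (1 - s))) * Real.log C := by
  obtain ⟨z, rfl⟩ := exists_complexToPlane_coe_eq hx
  obtain ⟨w, rfl⟩ := exists_complexToPlane_coe_eq hy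
  rw [rhoH_complexToPlane, ← two_mul_artanh ⟨by linarith [hs.1], hs.2.le⟩]
  have artanh_pos := Real.artanh_pos hs
  have log_C_nonneg := Real.log_nonneg hC
  refine Real.sSup_le ?_ (by positivity)
  rintro _ ⟨u, hpos, hharm, rfl⟩
  exact (hH u hpos hharm).abs_log_div_le hpos hs z w
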